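/- Let m > 1, let N ≥ 2 be an integer, and let ψ be a model function, nondecreasing, whose associated function H satisfies (H'(r))² ≤ 2 H(r) for all r ≥ 0. Suppose U: [0,∞) → ℝ is a nondecreasing C¹ function with U(0) = 1, U(r) ≥ 1 for all r, U(r) ≤ (1+H(r))^{m/(m-1)} for all r, satisfying U'(r) ψ(r)^{N-1} = ∫₀^r ψ(s)^{N-1} U(s)^{1/m} ds for all r > 0. Then, setting κ_m := (m-1)²/(m(m+1)), one has U(r) ≥ κ_m^{m/(m-1)} H(r)^{m/(m-1)} for every r ≥ 0. -/

import Mathlib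

open Real MeasureTheory Set Filter

/-- The function `H` associated with a model function `ψ` on an `N`-dimensional model
manifold: `H r = ∫₀^r (∫₀^s ψ(t)^{N-1} dt) / ψ(s)^{N-1} ds`. -/
noncomputable def Hfun (N : ℕ) (ψ : ℝ → ℝ) (r : ℝ) : ℝ :=
  ∫ s in (0:ℝ)..r, (∫ t in (0:ℝ)..s, ψ t ^ (N - 1)) / ψ s ^ (N - 1)

lemma ftc_aux (f : ℝ → ℝ) (hf : ContinuousOn f (Ici 0)) :
    ContinuousOn (fun r => ∫ s in (0:ℝ)..r, f s) (Ici 0) ∧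
    ∀ r > (0:ℝ), HasDerivAt (fun r => ∫ s in (0:ℝ)..r, f s) (f r) r := by
  have hg : Continuous (fun s => f (max s 0)) :=
    hf.comp_continuous (by fun_prop) (fun s => le_max_right s 0)
  have hd : ∀ r, HasDerivAt (fun r => ∫ s in (0:ℝ)..r, f (max s 0)) (f (max r 0)) r :=
    fun r => hg.integral_hasStrictDerivAt 0 r |>.hasDerivAt
  have he : ∀ r ∈ Ici (0:ℝ), (∫ s in (0:ℝ)..r, f s) = ∫ s in (0:ℝ)..r, f (max s 0) := by
    intro r hr
    apply intervalIntegral.integral_congr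
    intro s hs
    rw [uIcc_of_le hr] at hs
    simp [max_eq_left hs.1]
  constructor
  · refine ContinuousOn.congr (f := fun r => ∫ s in (0:ℝ)..r, f (max s 0)) ?_ he
    exact fun r _ => (hd r).continuousAt.continuousWithinAt
  · intro r hr
    have h1 := hd r
    rw [max_eq_left hr.le] at h1
    refine h1.congr_of_eventuallyEq ?_
    filter_upwards [Ici_mem_nhds hr] with x hx using he x hx

lemma pos_aux (f : ℝ → ℝ) (hf : ContinuousOn f (Ici 0)) (hp : ∀ r > (0:ℝ), 0 < f r) :
    ∀ r > (0:ℝ), 0 < ∫ s in (0:ℝ)..r, f s := by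
  intro r hr
  obtain ⟨h1, h2⟩ := ftc_aux f hf
  have h3 := strictMonoOn_of_deriv_pos (convex_Ici 0) h1 (by
    intro x hx
    rw [interior_Ici] at hx
    rw [(h2 x hx).deriv]
    exact hp x hx)
  have := h3 (mem_Ici.2 le_rfl) (mem_Ici.2 hr.le) hr
  simpa using this

/-- Lower bound for solutions of the radial ODE `(ψ^{N-1} U')' = ψ^{N-1} U^{1/m}`:
under `(H')² ≤ 2H`, if `U` is nondecreasing `C¹`, `U(0)=1`, `U ≥ 1`,
`U ≤ (1+H)^{m/(m-1)}`, and `U'(r) ψ(r)^{N-1} = ∫₀^r ψ(s)^{N-1} U(s)^{1/m} ds`, then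
with `κ_m := (m-1)²/(m(m+1))` one has `U(r) ≥ κ_m^{m/(m-1)} H(r)^{m/(m-1)}`. -/
theorem statement4 (m : ℝ) (hm : 1 < m) (N : ℕ) (hN : 2 ≤ N) (ψ : ℝ → ℝ)
    (hsmooth : ContDiffOn ℝ (⊤ : ℕ∞) ψ (Ici 0))
    (hψ0 : ψ 0 = 0) (hψ'0 : deriv ψ 0 = 1)
    (hψpos : ∀ r > (0:ℝ), 0 < ψ r)
    (hmono : MonotoneOn ψ (Ici 0))
    (hH2 : ∀ r ≥ (0:ℝ), (deriv (Hfun N ψ) r) ^ 2 ≤ 2 * Hfun N ψ r)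
    (U : ℝ → ℝ) (hUC1 : ContDiffOn ℝ 1 U (Ici 0))
    (hUmono : MonotoneOn U (Ici 0))
    (hU0 : U 0 = 1) (hU1 : ∀ r ≥ (0:ℝ), 1 ≤ U r)
    (hUup : ∀ r ≥ (0:ℝ), U r ≤ (1 + Hfun N ψ r) ^ (m/(m-1)))
    (hUeq : ∀ r > (0:ℝ), deriv U r * ψ r ^ (N - 1)
        = ∫ s in (0:ℝ)..r, ψ s ^ (N - 1) * U s ^ (1/m)) :
    ∀ r ≥ (0:ℝ), ((m-1)^2/(m*(m+1))) ^ (m/(m-1)) * Hfun N ψ r ^ (m/(m-1)) ≤ U r := by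
  obtain ⟨q, hq⟩ : ∃ q : ℝ → ℝ, q = fun s => ψ s ^ (N - 1) := ⟨_, rfl⟩
  have hqc : ContinuousOn q (Ici 0) := by
    rw [hq]; exact hsmooth.continuousOn.pow _
  have hqpos : ∀ r > (0:ℝ), 0 < q r := by
    intro r hr; rw [hq]; exact pow_pos (hψpos r hr) _
  have hq0 : q 0 = 0 := by
    rw [hq]; simp only [hψ0]; exact zero_pow (by omega)
  have hqm : MonotoneOn q (Ici 0) := by
    intro x hx y hy hxy
    rw [hq]
    have : 0 ≤ ψ x := by rw [← hψ0]; exact hmono (mem_Ici.2 le_rfl) hx hx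
    exact pow_le_pow_left₀ this (hmono hx hy hxy) _
  have hqnn : ∀ r ≥ (0:ℝ), 0 ≤ q r := by
    intro r hr; rw [← hq0]; exact hqm (mem_Ici.2 le_rfl) hr hr
  obtain ⟨Q, hQ⟩ : ∃ Q : ℝ → ℝ, Q = fun r => ∫ s in (0:ℝ)..r, q s := ⟨_, rfl⟩
  have hQc : ContinuousOn Q (Ici 0) := hQ ▸ (ftc_aux q hqc).1
  have hQd : ∀ r > (0:ℝ), HasDerivAt Q (q r) r := hQ ▸ (ftc_aux q hqc).2
  have hQpos : ∀ r > (0:ℝ), 0 < Q r := hQ ▸ pos_aux q hqc hqpos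
  have hQ0 : Q 0 = 0 := by rw [hQ]; simp
  have hii : ∀ (f : ℝ → ℝ), ContinuousOn f (Ici 0) → ∀ r ≥ (0:ℝ),
      IntervalIntegrable f volume 0 r := by
    intro f hf r hr
    apply ContinuousOn.intervalIntegrable
    rw [uIcc_of_le hr]
    exact hf.mono Icc_subset_Ici_self
  have hQle : ∀ r ≥ (0:ℝ), Q r ≤ r * q r := by
    intro r hr
    have : (∫ s in (0:ℝ)..r, q s) ≤ ∫ s in (0:ℝ)..r, q r := by
      apply intervalIntegral.integral_mono_on hr (hii q hqc r hr) (by simp)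
      intro x hx
      exact hqm hx.1 hr hx.2
    rw [hQ]
    simpa using this
  obtain ⟨h, hh⟩ : ∃ h : ℝ → ℝ, h = fun s => Q s / q s := ⟨_, rfl⟩
  have hhpos : ∀ r > (0:ℝ), 0 < h r := by
    intro r hr; rw [hh]; exact div_pos (hQpos r hr) (hqpos r hr)
  have hh0 : h 0 = 0 := by rw [hh]; simp [hQ0]
  have hhle : ∀ r ≥ (0:ℝ), h r ≤ r := by
    intro r hr
    rcases hr.eq_or_lt with h0 | h0
    · rw [← h0, hh0]
    · rw [hh]; exact (div_le_iff₀ (hqpos r h0)).2 (hQle r hr)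
  have hhc : ContinuousOn h (Ici 0) := by
    intro x hx
    rcases (mem_Ici.1 hx).eq_or_lt with h0 | h0
    · subst h0
      unfold ContinuousWithinAt
      rw [hh0]
      have t : Tendsto (fun x : ℝ => x) (nhdsWithin 0 (Ici 0)) (nhds 0) :=
        tendsto_id.mono_left nhdsWithin_le_nhds
      refine tendsto_of_tendsto_of_tendsto_of_le_of_le' tendsto_const_nhds t ?_ ?_
      · filter_upwards [self_mem_nhdsWithin] with y hy
        rcases (mem_Ici.1 hy).eq_or_lt with h1 | h1
        · rw [← h1, hh0]
        · exact (hhpos y h1).le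
      · filter_upwards [self_mem_nhdsWithin] with y hy using hhle y hy
    · rw [hh]
      exact (hQc x hx).div (hqc x hx) (hqpos x h0).ne'
  obtain ⟨H, hH⟩ : ∃ H : ℝ → ℝ, H = Hfun N ψ := ⟨_, rfl⟩
  have hHe : H = fun r => ∫ s in (0:ℝ)..r, h s := by
    rw [hH, hh, hQ, hq]; rfl
  have hHc : ContinuousOn H (Ici 0) := hHe ▸ (ftc_aux h hhc).1
  have hHd : ∀ r > (0:ℝ), HasDerivAt H (h r) r := hHe ▸ (ftc_aux h hhc).2
  have hHpos : ∀ r > (0:ℝ), 0 < H r := hHe ▸ pos_aux h hhc hhpos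
  have hH0 : H 0 = 0 := by rw [hHe]; simp
  have hHnn : ∀ r ≥ (0:ℝ), 0 ≤ H r := by
    intro r hr
    rcases hr.eq_or_lt with h0 | h0
    · rw [← h0, hH0]
    · exact (hHpos r h0).le
  rw [← hH] at hH2 ⊢
  have hh2 : ∀ r > (0:ℝ), h r ^ 2 ≤ 2 * H r := by
    intro r hr
    have := hH2 r hr.le
    rwa [(hHd r hr).deriv] at this
  have hUeq' : ∀ r > (0:ℝ), deriv U r * q r = ∫ s in (0:ℝ)..r, q s * U s ^ (1/m) := by
    rw [hq]; exact hUeq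
  -- constants
  have hm1 : 0 < m - 1 := by linarith
  have hm0 : 0 < m := by linarith
  obtain ⟨p, hp⟩ : ∃ p : ℝ, p = m/(m-1) := ⟨_, rfl⟩
  obtain ⟨κ, hκ⟩ : ∃ κ : ℝ, κ = (m-1)^2/(m*(m+1)) := ⟨_, rfl⟩
  rw [← hp, ← hκ]
  have hp1 : 1 < p := by rw [hp, lt_div_iff₀ hm1]; linarith
  have hκpos : 0 < κ := by rw [hκ]; positivity
  have hpm : p * (1/m) = p - 1 := by rw [hp]; field_simp; ring
  have hpκ : κ * (p * (2 * p - 1)) = 1 := by rw [hp, hκ]; field_simp; ring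
  obtain ⟨a, ha⟩ : ∃ a : ℝ, a = κ ^ (p - 1) := ⟨_, rfl⟩
  have hapos : 0 < a := by rw [ha]; positivity
  have hc : κ ^ p = a * κ := by
    rw [ha]; nth_rewrite 3 [← Real.rpow_one κ]; rw [← Real.rpow_add hκpos]; congr 1; ring
  obtain ⟨V, hV⟩ : ∃ V : ℝ → ℝ, V = fun r => κ ^ p * H r ^ p := ⟨_, rfl⟩
  have hVc : ContinuousOn V (Ici 0) := by
    rw [hV]
    exact continuousOn_const.mul (hHc.rpow_const (fun x _ => Or.inr (by linarith)))
  have hVd : ∀ r > (0:ℝ), HasDerivAt V (κ ^ p * (h r * p * H r ^ (p - 1))) r := by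
    intro r hr
    rw [hV]
    exact ((hHd r hr).rpow_const (Or.inl (hHpos r hr).ne')).const_mul _
  have hV0 : V 0 = 0 := by
    rw [hV]; simp only [hH0]; rw [Real.zero_rpow (by linarith)]; simp
  have hVnn : ∀ r ≥ (0:ℝ), 0 ≤ V r := by
    intro r hr; rw [hV]; have := hHnn r hr; positivity
  have hVm : ∀ r ≥ (0:ℝ), V r ^ (1/m) = a * H r ^ (p - 1) := by
    intro r hr
    rw [hV]
    simp only
    rw [Real.mul_rpow (by positivity) (Real.rpow_nonneg (hHnn r hr) _), ← Real.rpow_mul hκpos.le,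
      ← Real.rpow_mul (hHnn r hr), hpm, ha]
  have hHpc : ContinuousOn (fun r => H r ^ (p - 1)) (Ici 0) :=
    hHc.rpow_const (fun x _ => Or.inr (by linarith))
  -- subsolution property
  have hcW : ContinuousOn (fun s => q s * (a * H s ^ (p - 1))) (Ici 0) :=
    hqc.mul (continuousOn_const.mul hHpc)
  have hsub : ∀ r > (0:ℝ), κ ^ p * p * (H r ^ (p - 1) * Q r)
      ≤ ∫ s in (0:ℝ)..r, q s * (a * H s ^ (p - 1)) := by
    intro r hr
    obtain ⟨f1, f2⟩ := ftc_aux _ hcW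
    have hd : ∀ x > (0:ℝ), HasDerivAt (fun r => (∫ s in (0:ℝ)..r, q s * (a * H s ^ (p - 1)))
        - κ ^ p * p * (H r ^ (p - 1) * Q r))
        (q x * (a * H x ^ (p - 1)) - κ ^ p * p *
          (h x * (p - 1) * H x ^ (p - 1 - 1) * Q x + H x ^ (p - 1) * q x)) x := by
      intro x hx
      exact (f2 x hx).sub ((((hHd x hx).rpow_const (Or.inl (hHpos x hx).ne')).mul
        (hQd x hx)).const_mul _)
    have hmo := monotoneOn_of_deriv_nonneg
      (f := fun r => (∫ s in (0:ℝ)..r, q s * (a * H s ^ (p - 1)))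
        - κ ^ p * p * (H r ^ (p - 1) * Q r)) (convex_Ici 0)
      (f1.sub (continuousOn_const.mul (hHpc.mul hQc)) :
        ContinuousOn (fun r => (∫ s in (0:ℝ)..r, q s * (a * H s ^ (p - 1)))
        - κ ^ p * p * (H r ^ (p - 1) * Q r)) (Ici 0))
      (by
        intro x hx
        rw [interior_Ici] at hx
        exact (hd x hx).differentiableAt.differentiableWithinAt)
      (by
        intro x hx
        rw [interior_Ici] at hx
        have hx : 0 < x := hx
        rw [(hd x hx).deriv]
        have e1 : Q x = h x * q x := by
          rw [hh]; simp only; rw [div_mul_cancel₀ _ (hqpos x hx).ne']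
        have e2 : H x ^ (p - 1) = H x ^ (p - 1 - 1) * H x := by
          nth_rewrite 3 [← Real.rpow_one (H x)]
          rw [← Real.rpow_add (hHpos x hx)]; congr 1; ring
        have e3 : 0 < H x ^ (p - 1 - 1) := Real.rpow_pos_of_pos (hHpos x hx) _
        rw [e1, e2, hc]
        generalize H x ^ (p - 1 - 1) = Z at *
        have e4 : 0 ≤ (q x * a * Z * (κ * p * (p - 1))) * (2 * H x - h x ^ 2) := by
          apply mul_nonneg
          · have := hqpos x hx
            have : 0 < p - 1 := by linarith
            positivity
          · linarith [hh2 x hx]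
        have e5 : q x * a * Z * H x * (κ * (p * (2 * p - 1))) = q x * a * Z * H x := by
          rw [hpκ, mul_one]
        nlinarith [e4, e5])
    have := hmo (mem_Ici.2 le_rfl) (mem_Ici.2 hr.le) hr.le
    simp only [intervalIntegral.integral_same, hQ0, mul_zero, sub_zero] at this
    linarith
  -- comparison
  have hUc := hUC1.continuousOn
  have hUd : ∀ x > (0:ℝ), HasDerivAt U (deriv U x) x := by
    intro x hx
    exact ((hUC1.differentiableOn (by norm_num)).differentiableAt (Ici_mem_nhds hx)).hasDerivAt
  intro r hr
  by_contra hcon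
  push Not at hcon
  have hDc : ContinuousOn (fun x => U x - V x) (Icc 0 r) :=
    (hUc.sub hVc).mono Icc_subset_Ici_self
  have hSc : IsCompact (Icc 0 r ∩ (fun x => U x - V x) ⁻¹' Iic 0) :=
    isCompact_Icc.of_isClosed_subset (hDc.preimage_isClosed_of_isClosed isClosed_Icc isClosed_Iic)
      inter_subset_left
  have hVr : U r < V r := by rw [hV]; exact hcon
  obtain ⟨R, ⟨hR, hRD⟩, hRmin⟩ := hSc.exists_isLeast
    ⟨r, ⟨⟨hr, le_rfl⟩, by simp only [mem_preimage, mem_Iic]; linarith⟩⟩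
  simp only [mem_preimage, mem_Iic] at hRD
  have hlt : ∀ x, 0 ≤ x → x < R → V x < U x := by
    intro x hx hxR
    by_contra hc'
    push Not at hc'
    have := hRmin ⟨⟨hx, by linarith [hR.2]⟩, by simp only [mem_preimage, mem_Iic]; linarith⟩
    linarith
  have hmo := monotoneOn_of_deriv_nonneg (f := fun x => U x - V x) (convex_Icc 0 R)
    ((hUc.sub hVc).mono Icc_subset_Ici_self : ContinuousOn (fun x => U x - V x) (Icc 0 R))
    (by
      intro x hx
      rw [interior_Icc] at hx
      exact ((hUd x hx.1).sub (hVd x hx.1)).differentiableAt.differentiableWithinAt)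
    (by
      intro x hx
      rw [interior_Icc] at hx
      have hx0 := hx.1
      have hdd : deriv (fun x => U x - V x) x = _ := ((hUd x hx0).sub (hVd x hx0)).deriv
      rw [hdd, sub_nonneg]
      have hq' := hqpos x hx0
      refine le_of_mul_le_mul_right ?_ hq'
      rw [hUeq' x hx0]
      have e1 : Q x = h x * q x := by
        rw [hh]; simp only; rw [div_mul_cancel₀ _ hq'.ne']
      have e2 := hsub x hx0
      rw [e1] at e2
      have e3 : (∫ s in (0:ℝ)..x, q s * (a * H s ^ (p - 1)))
          ≤ ∫ s in (0:ℝ)..x, q s * U s ^ (1/m) := by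
        apply intervalIntegral.integral_mono_on hx0.le (hii _ hcW x hx0.le)
        · apply hii _ _ x hx0.le
          exact hqc.mul (hUc.rpow_const (fun x _ => Or.inr (by positivity)))
        · intro s hs
          rw [← hVm s hs.1]
          apply mul_le_mul_of_nonneg_left _ (hqnn s hs.1)
          exact Real.rpow_le_rpow (hVnn s hs.1) (hlt s hs.1 (by linarith [hs.2, hx.2])).le
            (by positivity)
      linarith)
  have := hmo (⟨le_rfl, hR.1⟩ : (0:ℝ) ∈ Icc 0 R) (⟨hR.1, le_rfl⟩ : R ∈ Icc 0 R) hR.1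
  simp only [hU0, hV0] at this
  linarith
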